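/- Let n ≥ 3, let 1 ≤ m < n, and let k ≥ 1. Let F(k) be the subgroup of SL_n(ℤ) generated by U⁺(kℤ), U⁻(kℤ) and M(kℤ), and let Γ_k be the intersection of all congruence subgroups of SL_n(ℤ) containing F(k). Then Γ_k is itself a congruence subgroup of SL_n(ℤ); in particular there exists N ≥ 1 with SL_n(Nℤ) ⊆ Γ_k, and Γ_k has finite index in SL_n(ℤ). -/

import Mathlib

/-!
Every congruence subgroup `H ⊇ F(k)` contains `SL_n(k²ℤ)`, whatever its level `N`; hence so does
`Γ_k`.

Indeed `F(k)` contains all elementary matrices with off-diagonal entry divisible by `k`, and modulo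
`N` these already generate a subgroup containing `SL_n(k²ℤ)`. A matrix congruent to `1` modulo `k²`
is reduced to `1` column by column: the finite ring `ℤ/N` has stable range one, so elementary
matrices with entries divisible by `k²` turn the pivot into a unit `u`; multiplying by
`diag(u⁻¹, u)` makes it `1`, and the rest of the column can be cleared. The pivot of the last column
is `1` already, because the determinant is. By Whitehead's lemma `diag(u⁻¹, u)` with `u ≡ 1` modulo
`k²` is a product of elementary matrices with entries divisible by `k`; this is the only step that
loses a factor `k`.
-/

open Matrix

/-- `U⁺(kℤ)`: matrices `I + X` in `SL_n(ℤ)` with `X` supported in the top-right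
`m × (n−m)` block and all entries of `X` divisible by `k`. -/
def Uplus (n m k : ℕ) : Set (Matrix.SpecialLinearGroup (Fin n) ℤ) :=
  {g | ∀ i j : Fin n, if i = j then g.1 i j = 1
      else if (i : ℕ) < m ∧ m ≤ (j : ℕ) then (k : ℤ) ∣ g.1 i j
      else g.1 i j = 0}

/-- `U⁻(kℤ)`: matrices `I + X` in `SL_n(ℤ)` with `X` supported in the bottom-left
`(n−m) × m` block and all entries of `X` divisible by `k`. -/
def Uminus (n m k : ℕ) : Set (Matrix.SpecialLinearGroup (Fin n) ℤ) :=
  {g | ∀ i j : Fin n, if i = j then g.1 i j = 1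
      else if m ≤ (i : ℕ) ∧ (j : ℕ) < m then (k : ℤ) ∣ g.1 i j
      else g.1 i j = 0}

/-- `M(kℤ)`: block diagonal matrices `diag(A, B)` in `SL_n(ℤ)` with `A ∈ SL_m(ℤ)`,
`B ∈ SL_{n−m}(ℤ)`, and both `A` and `B` congruent to the identity mod `k`. -/
def Mblock (n m k : ℕ) (h : m ≤ n) : Set (Matrix.SpecialLinearGroup (Fin n) ℤ) :=
  {g | (∀ i j : Fin n, ¬((i : ℕ) < m ↔ (j : ℕ) < m) → g.1 i j = 0) ∧
       (∀ i j : Fin n, (k : ℤ) ∣ (g.1 i j - if i = j then 1 else 0)) ∧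
       (Matrix.of fun i j : Fin m => g.1 (Fin.castLE h i) (Fin.castLE h j)).det = 1 ∧
       (Matrix.of fun i j : Fin (n - m) =>
          g.1 ⟨m + (i : ℕ), by have := i.2; omega⟩ ⟨m + (j : ℕ), by have := j.2; omega⟩).det = 1}

/-- `F(k)`: the subgroup of `SL_n(ℤ)` generated by `U⁺(kℤ)`, `U⁻(kℤ)` and `M(kℤ)`. -/
def Fgroup (n m k : ℕ) (h : m ≤ n) : Subgroup (Matrix.SpecialLinearGroup (Fin n) ℤ) :=
  Subgroup.closure (Uplus n m k ∪ Uminus n m k ∪ Mblock n m k h)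

/-- A subgroup of `SL_n(ℤ)` is a congruence subgroup if it contains a principal congruence
subgroup `SL_n(Nℤ)` for some `N ≥ 1`. -/
def IsCongruenceSubgroup (n : ℕ) (H : Subgroup (Matrix.SpecialLinearGroup (Fin n) ℤ)) : Prop :=
  ∃ N : ℕ, 1 ≤ N ∧ ∀ g : Matrix.SpecialLinearGroup (Fin n) ℤ,
    (∀ i j : Fin n, (N : ℤ) ∣ (g.1 i j - if i = j then 1 else 0)) → g ∈ H

/-- `Γ_k`: the intersection of all congruence subgroups of `SL_n(ℤ)` containing `F(k)`. -/
def GammaCl (n m k : ℕ) (h : m ≤ n) : Subgroup (Matrix.SpecialLinearGroup (Fin n) ℤ) :=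
  sInf {H | IsCongruenceSubgroup n H ∧ Fgroup n m k h ≤ H}

section StableRange

variable {R : Type*} [CommRing R]

/-- Bass's stable range condition `sr(R) = 1`: a coprime pair can be shortened to a unit. -/
def HasStableRangeOne (R : Type*) [CommRing R] : Prop :=
  ∀ ⦃x y : R⦄, IsCoprime x y → ∃ t, IsUnit (x + t * y)

-- By the Chinese remainder theorem, `t` may be chosen to be `1` modulo the maximal ideals that
-- contain `x` and `0` modulo the others.
lemma HasStableRangeOne.of_finite_maximalSpectrum [Finite (MaximalSpectrum R)] :
    HasStableRangeOne R := by
  classical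
  intro x y hxy
  have hcoprime : Pairwise (Function.onFun IsCoprime (MaximalSpectrum.asIdeal (R := R))) :=
    fun M N hMN => Ideal.isCoprime_of_isMaximal fun h => hMN (MaximalSpectrum.ext h)
  obtain ⟨t, ht⟩ := Ideal.exists_forall_sub_mem_ideal hcoprime
    fun M => if x ∈ M.asIdeal then 1 else 0
  refine ⟨t, by_contra fun hunit => ?_⟩
  obtain ⟨M, hM, hxty⟩ := exists_max_ideal_of_mem_nonunits hunit
  specialize ht ⟨M, hM⟩
  by_cases hx : x ∈ M
  · have hty : t * y ∈ M := (M.add_mem_iff_right hx).1 hxty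
    have ht1 : t - 1 ∈ M := by simpa [hx] using ht
    have hy : y ∈ M := by
      simpa [sub_mul] using M.sub_mem hty (M.mul_mem_right y ht1)
    obtain ⟨a, b, hab⟩ := hxy
    exact hM.ne_top <| (Ideal.eq_top_iff_one M).2 <|
      hab ▸ M.add_mem (M.mul_mem_left a hx) (M.mul_mem_left b hy)
  · have ht0 : t ∈ M := by simpa [hx] using ht
    exact hx <| (M.add_mem_iff_left (M.mul_mem_right y ht0)).1 hxty

end StableRange

section Transvection

variable {ι R R' : Type*} [Fintype ι] [DecidableEq ι] [CommRing R] [CommRing R']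

lemma transvection_apply {i j : ι} (hij : i ≠ j) (a : R) (k l : ι) :
    SpecialLinearGroup.transvection hij a k l =
      if k = l then 1 else if i = k ∧ j = l then a else 0 := by
  rw [SpecialLinearGroup.transvection_coe, Matrix.add_apply, one_apply, single_apply]
  split_ifs <;> simp_all

lemma map_transvection (f : R →+* R') {i j : ι} (hij : i ≠ j) (a : R) :
    SpecialLinearGroup.map f (SpecialLinearGroup.transvection hij a) =
      SpecialLinearGroup.transvection hij (f a) := by
  ext k l
  simp [transvection_apply, apply_ite f]

lemma det_submatrix_transvection {κ : Type*} [Fintype κ] [DecidableEq κ] {f : κ → ι}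
    (hf : Function.Injective f) {i j : ι} (hij : i ≠ j) (a : R) :
    ((SpecialLinearGroup.transvection hij a : Matrix ι ι R).submatrix f f).det = 1 := by
  by_cases hrange : ∃ i' j', f i' = i ∧ f j' = j
  · obtain ⟨i', j', rfl, rfl⟩ := hrange
    have hij' : i' ≠ j' := fun h => hij (h ▸ rfl)
    convert (SpecialLinearGroup.transvection hij' a).det_coe
    ext k l
    simp only [submatrix_apply, transvection_apply, hf.eq_iff]
  · convert det_one (R := R) (n := κ)
    ext k l
    have hkl : ¬(i = f k ∧ j = f l) := fun h => hrange ⟨k, l, h.1.symm, h.2.symm⟩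
    simp only [submatrix_apply, transvection_apply, hf.eq_iff, if_neg hkl, one_apply]

instance : FaithfulSMul (SpecialLinearGroup ι R) (ι → R) :=
  ⟨fun h => Subtype.ext <| ext_of_mulVec_single fun j => h (Pi.single j 1)⟩

lemma transvection_smul {i j : ι} (hij : i ≠ j) (a : R) (v : ι → R) :
    SpecialLinearGroup.transvection hij a • v = v + Pi.single i (a * v j) := by
  rw [Matrix.SpecialLinearGroup.smul_def, SpecialLinearGroup.transvection_coe, add_smul, one_smul,
    smul_eq_mulVec, single_mulVec_eq, ← Pi.single_smul, smul_eq_mul, mul_one]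

lemma smul_single_one_apply (g : SpecialLinearGroup ι R) (i j : ι) :
    (g • (Pi.single j 1 : ι → R)) i = g i j := by
  simp [Matrix.SpecialLinearGroup.smul_def]

end Transvection

section Subgroups

variable {ι R R' : Type*} [Fintype ι] [DecidableEq ι] [CommRing R] [CommRing R']

variable (ι) in
/-- The principal congruence subgroup `SL(R, I)` of an ideal `I`, as the kernel of reduction
modulo `I`. -/
def principalCongruenceSubgroup (I : Ideal R) : Subgroup (SpecialLinearGroup ι R) :=
  (SpecialLinearGroup.map (Ideal.Quotient.mk I)).ker

lemma mem_principalCongruenceSubgroup {I : Ideal R} {g : SpecialLinearGroup ι R} :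
    g ∈ principalCongruenceSubgroup ι I ↔ ∀ i j, g i j - (1 : Matrix ι ι R) i j ∈ I := by
  rw [principalCongruenceSubgroup, MonoidHom.mem_ker, Matrix.SpecialLinearGroup.ext_iff]
  simp [← Ideal.Quotient.mk_eq_mk_iff_sub_mem, one_apply, apply_ite (Ideal.Quotient.mk I)]

instance (I : Ideal R) [Finite (R ⧸ I)] : (principalCongruenceSubgroup ι I).FiniteIndex :=
  inferInstanceAs (SpecialLinearGroup.map _).ker.FiniteIndex

variable (ι) in
/-- The subgroup `E(I)` generated by the elementary matrices with off-diagonal entry in `I`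
(not its normal closure, the relative elementary subgroup). -/
def elementarySubgroup (I : Ideal R) : Subgroup (SpecialLinearGroup ι R) :=
  Subgroup.closure {g | ∃ (i j : ι) (hij : i ≠ j), ∃ a ∈ I,
    SpecialLinearGroup.transvection hij a = g}

lemma transvection_mem_elementarySubgroup {I : Ideal R} {i j : ι} (hij : i ≠ j) {a : R}
    (ha : a ∈ I) : SpecialLinearGroup.transvection hij a ∈ elementarySubgroup ι I :=
  Subgroup.subset_closure ⟨i, j, hij, a, ha, rfl⟩

lemma elementarySubgroup_le_iff {I : Ideal R} {S : Subgroup (SpecialLinearGroup ι R)} :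
    elementarySubgroup ι I ≤ S ↔
      ∀ (i j : ι) (hij : i ≠ j), ∀ a ∈ I, SpecialLinearGroup.transvection hij a ∈ S := by
  rw [elementarySubgroup, Subgroup.closure_le]
  exact ⟨fun h i j hij a ha => h ⟨i, j, hij, a, ha, rfl⟩,
    by rintro h _ ⟨i, j, hij, a, ha, rfl⟩; exact h i j hij a ha⟩

lemma elementarySubgroup_mono {I J : Ideal R} (hIJ : I ≤ J) :
    elementarySubgroup ι I ≤ elementarySubgroup ι J :=
  elementarySubgroup_le_iff.2 fun _ _ hij _ ha =>
    transvection_mem_elementarySubgroup hij (hIJ ha)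

lemma elementarySubgroup_map_le {f : R →+* R'} (hf : Function.Surjective f) (I : Ideal R) :
    elementarySubgroup ι (I.map f) ≤
      (elementarySubgroup ι I).map (SpecialLinearGroup.map f) := by
  refine elementarySubgroup_le_iff.2 fun i j hij b hb => ?_
  obtain ⟨a, ha, rfl⟩ := (Ideal.mem_map_iff_of_surjective f hf).1 hb
  exact ⟨_, transvection_mem_elementarySubgroup hij ha, map_transvection f hij a⟩

lemma principalCongruenceSubgroup_le_comap (f : R →+* R') (I : Ideal R) :
    principalCongruenceSubgroup ι I ≤
      (principalCongruenceSubgroup ι (I.map f)).comap (SpecialLinearGroup.map f) := by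
  intro g hg
  refine mem_principalCongruenceSubgroup.2 fun i j => ?_
  have h := Ideal.mem_map_of_mem f (mem_principalCongruenceSubgroup.1 hg i j)
  simpa [one_apply, apply_ite f] using h

end Subgroups

section Torus

variable {ι R : Type*} [Fintype ι] [DecidableEq ι] [CommRing R]

lemma units_inv_sub_one_mem {I : Ideal R} {u : Rˣ} (hu : (u : R) - 1 ∈ I) :
    (↑u⁻¹ : R) - 1 ∈ I := by
  have h : (↑u⁻¹ : R) - 1 = -(↑u⁻¹ * (u - 1)) := by simp [mul_sub]
  exact h ▸ neg_mem (I.mul_mem_left _ hu)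

/-- The value at `u` of the coroot `p - q`: the diagonal matrix with entry `u` at `p`, `u⁻¹` at
`q` and `1` elsewhere (the identity if `p = q`). -/
def corootElement (p q : ι) (u : Rˣ) : SpecialLinearGroup ι R :=
  ⟨diagonal fun i => ((Pi.mulSingle p u * Pi.mulSingle q u⁻¹ : ι → Rˣ) i : R), by
    simp only [det_diagonal, ← Units.coe_prod, Pi.mul_apply, Finset.prod_mul_distrib,
      Fintype.prod_pi_mulSingle', mul_inv_cancel, Units.val_one]⟩

lemma corootElement_smul_apply (p q : ι) (u : Rˣ) (v : ι → R) (i : ι) :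
    (corootElement p q u • v) i =
      ((Pi.mulSingle p u * Pi.mulSingle q u⁻¹ : ι → Rˣ) i : R) * v i :=
  mulVec_diagonal _ _ _

-- Whitehead's lemma: `E_pq(a) E_qp(b)` has the unit `u` at `(p, p)`, and the outer factors clear
-- its two off-diagonal entries.
lemma corootElement_eq_mul_transvection {p q : ι} (hpq : p ≠ q) {a b : R} {u : Rˣ}
    (hu : (u : R) = 1 + a * b) :
    corootElement p q u =
      SpecialLinearGroup.transvection hpq.symm (-(b * ↑u⁻¹)) *
        SpecialLinearGroup.transvection hpq a *
        SpecialLinearGroup.transvection hpq.symm b *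
        SpecialLinearGroup.transvection hpq (-(a * ↑u⁻¹)) := by
  have hinv : (↑u⁻¹ : R) * (1 + a * b) = 1 := by rw [← hu, Units.inv_mul]
  refine FaithfulSMul.eq_of_smul_eq_smul fun v : ι → R => funext fun i => ?_
  simp only [corootElement_smul_apply, mul_smul, transvection_smul]
  rcases eq_or_ne i p with rfl | hip
  · simp only [Pi.mul_apply, Pi.mulSingle_eq_same, ne_eq, hpq, not_false_eq_true,
      Pi.mulSingle_eq_of_ne, mul_one, hu, neg_mul, Pi.add_apply, Pi.single_eq_same, hpq.symm,
      Pi.single_eq_of_ne, add_zero]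
    linear_combination (a * v q) * hinv
  rcases eq_or_ne i q with rfl | hiq
  · simp only [Pi.mul_apply, ne_eq, hpq.symm, not_false_eq_true, Pi.mulSingle_eq_of_ne,
      Pi.mulSingle_eq_same, one_mul, neg_mul, Pi.add_apply, Pi.single_eq_same,
      Pi.single_eq_of_ne, add_zero, hpq]
    linear_combination (b * v p + v i * (1 + ↑u⁻¹ - ↑u⁻¹ * (1 + a * b))) * hinv
  · simp [hip, hiq]

lemma corootElement_mem_elementarySubgroup {p q : ι} (hpq : p ≠ q) {c : R} {u : Rˣ}
    (hu : (u : R) - 1 ∈ Ideal.span {c ^ 2}) :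
    corootElement p q u ∈ elementarySubgroup ι (Ideal.span {c}) := by
  obtain ⟨t, ht⟩ := Ideal.mem_span_singleton'.1 hu
  have huc : (u : R) = 1 + c * (t * c) := by linear_combination -ht
  have hc : c ∈ Ideal.span {c} := Ideal.mem_span_singleton_self c
  have htc : t * c ∈ Ideal.span {c} := Ideal.mul_mem_left _ t hc
  have hmem : ∀ {i j : ι} (hij : i ≠ j) {a : R}, a ∈ Ideal.span {c} →
      SpecialLinearGroup.transvection hij a ∈ elementarySubgroup ι (Ideal.span {c}) :=
    transvection_mem_elementarySubgroup
  rw [corootElement_eq_mul_transvection hpq huc]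
  exact mul_mem (mul_mem (mul_mem (hmem _ (neg_mem (Ideal.mul_mem_right _ _ htc))) (hmem _ hc))
    (hmem _ htc)) (hmem _ (neg_mem (Ideal.mul_mem_right _ _ hc)))

end Torus

section Elimination

variable {ι R : Type*} [Fintype ι] [DecidableEq ι] [CommRing R]
  {G : Subgroup (SpecialLinearGroup ι R)} {I : Ideal R} {p : ι}

lemma exists_smul_eq_add_single_sum (s : Finset ι) (hps : p ∉ s) {w : ι → R}
    (hG : ∀ l ∈ s, ∀ hpl : p ≠ l, SpecialLinearGroup.transvection hpl (w l) ∈ G) (v : ι → R) :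
    ∃ h ∈ G, h • v = v + Pi.single p (∑ l ∈ s, w l * v l) := by
  induction s using Finset.induction_on with
  | empty => exact ⟨1, one_mem G, by simp⟩
  | insert a s has ih =>
    obtain ⟨hpa, hps⟩ := not_or.1 (mt Finset.mem_insert.2 hps)
    obtain ⟨h, hh, hv⟩ := ih hps fun l hl => hG l (Finset.mem_insert_of_mem hl)
    refine ⟨_, mul_mem (hG a (Finset.mem_insert_self a s) hpa) hh, ?_⟩
    rw [mul_smul, hv, transvection_smul, Pi.add_apply, Pi.single_eq_of_ne' hpa, add_zero,
      Finset.sum_insert has, add_comm (w a * v a), Pi.single_add, add_assoc]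

lemma exists_smul_eq_add_sum_single (s : Finset ι) (hps : p ∉ s) {w : ι → R}
    (hG : ∀ i ∈ s, ∀ hip : i ≠ p, SpecialLinearGroup.transvection hip (w i) ∈ G) (v : ι → R) :
    ∃ h ∈ G, h • v = v + ∑ i ∈ s, Pi.single i (w i * v p) := by
  induction s using Finset.induction_on with
  | empty => exact ⟨1, one_mem G, by simp⟩
  | insert a s has ih =>
    obtain ⟨hpa, hps⟩ := not_or.1 (mt Finset.mem_insert.2 hps)
    obtain ⟨h, hh, hv⟩ := ih hps fun i hi => hG i (Finset.mem_insert_of_mem hi)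
    have hp : (∑ i ∈ s, Pi.single i (w i * v p) : ι → R) p = 0 := by
      rw [Finset.sum_apply]
      exact Finset.sum_eq_zero fun i hi =>
        Pi.single_eq_of_ne' (ne_of_mem_of_not_mem hi hps) _
    refine ⟨_, mul_mem (hG a (Finset.mem_insert_self a s) (Ne.symm hpa)) hh, ?_⟩
    rw [mul_smul, hv, transvection_smul, Pi.add_apply, hp, add_zero, Finset.sum_insert has,
      add_assoc, add_comm (Pi.single a _)]

lemma exists_smul_eq_single_of_apply_eq_one
    (hG : ∀ (i : ι) (hip : i ≠ p), ∀ a ∈ I, SpecialLinearGroup.transvection hip a ∈ G)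
    {v : ι → R} (hv : ∀ i, i ≠ p → v i ∈ I) (hvp : v p = 1) :
    ∃ h ∈ G, h • v = Pi.single p 1 := by
  obtain ⟨h, hh, hhv⟩ := exists_smul_eq_add_sum_single (w := -v)
    (Finset.univ.erase p) (Finset.notMem_erase p _)
    (fun i _ hip => hG i hip _ (neg_mem (hv i hip))) v
  refine ⟨h, hh, funext fun i => ?_⟩
  rw [hhv, Pi.add_apply, Finset.sum_apply, hvp]
  rcases eq_or_ne i p with rfl | hip
  · simp [hvp, Finset.sum_pi_single]
  · simp [Finset.sum_pi_single, hip]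

lemma exists_smul_apply_isUnit (hR : HasStableRangeOne R) {t : Finset ι} (hpt : p ∉ t)
    (hG : ∀ l ∈ t, ∀ hpl : p ≠ l, ∀ a ∈ I, SpecialLinearGroup.transvection hpl a ∈ G)
    {v y : ι → R} (hvp : v p - 1 ∈ I) (hy : ∑ l ∈ insert p t, y l * v l = 1) :
    ∃ h ∈ G, IsUnit ((h • v) p) ∧ (h • v) p - 1 ∈ I ∧ ∀ i ≠ p, (h • v) i = v i := by
  rw [Finset.sum_insert hpt] at hy
  -- The factor `e ∈ I` keeps the pair coprime and moves the coefficients of the relation into `I`.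
  set e := 1 - v p with he
  have hcop : IsCoprime (v p) (e * ∑ l ∈ t, y l * v l) :=
    ⟨1 + e * y p, 1, by linear_combination e * hy⟩
  obtain ⟨r, hr⟩ := hR hcop
  have heI : e ∈ I := by rw [he, ← neg_sub]; exact neg_mem hvp
  have hw : ∀ l, r * e * y l ∈ I := fun l => I.mul_mem_right _ (I.mul_mem_left r heI)
  obtain ⟨h, hh, hhv⟩ := exists_smul_eq_add_single_sum (w := fun l => r * e * y l) t hpt
    (fun l hl hpl => hG l hl hpl _ (hw l)) v
  have hhp : (h • v) p = v p + ∑ l ∈ t, r * e * y l * v l := by rw [hhv]; simp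
  refine ⟨h, hh, ?_, ?_, fun i hip => by simp [hhv, hip]⟩
  · convert hr using 1
    simp only [hhp, Finset.mul_sum, mul_assoc]
  · rw [hhp, add_sub_right_comm]
    exact add_mem hvp (sum_mem fun l _ => I.mul_mem_right _ (hw l))

lemma exists_smul_eq_single (hR : HasStableRangeOne R) {t : Finset ι} (hpt : p ∉ t) {q : ι}
    (hqt : q ∈ t)
    (hE : ∀ (i j : ι) (hij : i ≠ j), j ∈ insert p t → ∀ a ∈ I,
      SpecialLinearGroup.transvection hij a ∈ G)
    (hT : ∀ u : Rˣ, (u : R) - 1 ∈ I → corootElement p q u ∈ G)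
    {v y : ι → R} (hv : ∀ i, v i - (Pi.single p 1 : ι → R) i ∈ I)
    (hy : ∑ l ∈ insert p t, y l * v l = 1) :
    ∃ h ∈ G, h • v = Pi.single p 1 := by
  obtain ⟨h₁, hh₁, ⟨u, hu⟩, hup, hne⟩ := exists_smul_apply_isUnit (G := G) hR hpt
    (fun l hl hpl => hE p l hpl (Finset.mem_insert_of_mem hl)) (by simpa using hv p) hy
  have hu' : (↑u⁻¹ : R) - 1 ∈ I := units_inv_sub_one_mem (hu ▸ hup)
  have hpq : p ≠ q := fun h => hpt (h ▸ hqt)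
  obtain ⟨h₂, hh₂, h₂v⟩ := exists_smul_eq_single_of_apply_eq_one (I := I)
    (v := corootElement p q u⁻¹ • h₁ • v)
    (fun i hip => hE i p hip (Finset.mem_insert_self p t))
    (fun i hip => by
      rw [corootElement_smul_apply, hne i hip]
      exact I.mul_mem_left _ (by simpa [hip] using hv i))
    (by simp [corootElement_smul_apply, hpq, ← hu])
  exact ⟨h₂ * (corootElement p q u⁻¹ * h₁), mul_mem hh₂ (mul_mem (hT _ hu') hh₁), by
    rw [mul_smul, mul_smul, h₂v]⟩

end Elimination

section FixedColumns

variable {ι R : Type*} [Fintype ι] [DecidableEq ι] [CommRing R] {g : SpecialLinearGroup ι R}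
  {p : ι}

lemma eq_one_of_forall_smul_single (hg : ∀ j, g • (Pi.single j 1 : ι → R) = Pi.single j 1) :
    g = 1 := by
  ext i j
  rw [← smul_single_one_apply, hg, Matrix.SpecialLinearGroup.coe_one, one_apply, Pi.single_apply]

lemma apply_self_eq_one_of_forall_ne_smul_single
    (hg : ∀ j ≠ p, g • (Pi.single j 1 : ι → R) = Pi.single j 1) : g p p = 1 := by
  have hcol : (1 : Matrix ι ι R).updateCol p (fun i => g i p) = g := by
    ext i j
    rcases eq_or_ne j p with rfl | hjp
    · simp
    · rw [updateCol_ne hjp, ← smul_single_one_apply, hg j hjp, one_apply, Pi.single_apply]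
  have hdet := Matrix.SpecialLinearGroup.det_coe g
  rwa [← hcol, ← cramer_apply, cramer_one] at hdet

lemma sum_inv_mul_apply_eq_one {t : Finset ι} (hpt : p ∈ t)
    (hg : ∀ j ∉ t, g • (Pi.single j 1 : ι → R) = Pi.single j 1) :
    ∑ l ∈ t, g⁻¹ p l * g l p = 1 := by
  have hinv : ∀ l ∉ t, g⁻¹ p l = 0 := fun l hl => by
    rw [← smul_single_one_apply, inv_smul_eq_iff.2 (hg l hl).symm]
    exact Pi.single_eq_of_ne (ne_of_mem_of_not_mem hpt hl) _
  calc ∑ l ∈ t, g⁻¹ p l * g l p = ∑ l, g⁻¹ p l * g l p :=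
        Finset.sum_subset t.subset_univ fun l _ hl => by rw [hinv l hl, zero_mul]
    _ = (g⁻¹ * g) p p := by rw [Matrix.SpecialLinearGroup.coe_mul, mul_apply]
    _ = 1 := by simp

end FixedColumns

section PartialColumns

variable {ι R : Type*} [Fintype ι] [DecidableEq ι] [CommRing R] {I : Ideal R}

/-- The elements of `SL(R, I)` whose column `j` is that of the identity for every `j ∉ t`: the
stages of a column by column reduction of `SL(R, I)`. Column `j` is encoded as the image of the
basis vector `Pi.single j 1`. -/
def principalCongruenceSubgroupOn (I : Ideal R) (t : Finset ι) :
    Subgroup (SpecialLinearGroup ι R) :=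
  principalCongruenceSubgroup ι I ⊓
    fixingSubgroup (SpecialLinearGroup ι R) ((fun j => (Pi.single j 1 : ι → R)) '' {j | j ∉ t})

lemma mem_principalCongruenceSubgroupOn {t : Finset ι} {g : SpecialLinearGroup ι R} :
    g ∈ principalCongruenceSubgroupOn I t ↔ g ∈ principalCongruenceSubgroup ι I ∧
      ∀ j ∉ t, g • (Pi.single j 1 : ι → R) = Pi.single j 1 := by
  simp [principalCongruenceSubgroupOn, Subgroup.mem_inf, mem_fixingSubgroup_iff]

lemma transvection_mem_principalCongruenceSubgroupOn {t : Finset ι} {i j : ι} (hij : i ≠ j)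
    (hj : j ∈ t) {a : R} (ha : a ∈ I) :
    SpecialLinearGroup.transvection hij a ∈ principalCongruenceSubgroupOn I t := by
  refine mem_principalCongruenceSubgroupOn.2 ⟨mem_principalCongruenceSubgroup.2 fun k l => ?_,
    fun l hl => ?_⟩
  · rw [SpecialLinearGroup.transvection_coe, Matrix.add_apply, add_sub_cancel_left, single_apply]
    split_ifs <;> simp [ha]
  · have hlj : j ≠ l := fun h => hl (h ▸ hj)
    simp [transvection_smul, hlj]

lemma corootElement_mem_principalCongruenceSubgroupOn {t : Finset ι} {p q : ι} (hpq : p ≠ q)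
    (hp : p ∈ t) (hq : q ∈ t) {u : Rˣ} (hu : (u : R) - 1 ∈ I) :
    corootElement p q u ∈ principalCongruenceSubgroupOn I t := by
  refine mem_principalCongruenceSubgroupOn.2 ⟨mem_principalCongruenceSubgroup.2 fun i j => ?_,
    fun j hj => funext fun i => ?_⟩
  · rw [← smul_single_one_apply, corootElement_smul_apply]
    rcases eq_or_ne i j with rfl | hij
    · rcases eq_or_ne i p with rfl | hip
      · simpa [hpq] using hu
      rcases eq_or_ne i q with rfl | hiq
      · simpa [hip] using units_inv_sub_one_mem hu
      · simp [hip, hiq]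
    · simp [hij]
  · rw [corootElement_smul_apply]
    rcases eq_or_ne i j with rfl | hij
    · have hip := ne_of_mem_of_not_mem hp hj
      have hiq := ne_of_mem_of_not_mem hq hj
      simp [hip.symm, hiq.symm]
    · simp [hij]

lemma mem_principalCongruenceSubgroupOn_of_insert {t : Finset ι} {p : ι}
    {g : SpecialLinearGroup ι R} (hg : g ∈ principalCongruenceSubgroupOn I (insert p t))
    (hgp : g • (Pi.single p 1 : ι → R) = Pi.single p 1) :
    g ∈ principalCongruenceSubgroupOn I t := by
  obtain ⟨hgI, hgt⟩ := mem_principalCongruenceSubgroupOn.1 hg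
  refine mem_principalCongruenceSubgroupOn.2 ⟨hgI, fun j hjt => ?_⟩
  rcases eq_or_ne j p with rfl | hjp
  · exact hgp
  · exact hgt j (by simp [hjp, hjt])

end PartialColumns

section Reduction

variable {ι R : Type*} [Fintype ι] [DecidableEq ι] [CommRing R]
  {S : Subgroup (SpecialLinearGroup ι R)} {I : Ideal R}

lemma exists_mul_smul_single_eq_single (hR : HasStableRangeOne R)
    (hE : elementarySubgroup ι I ≤ S)
    (hT : ∀ p q : ι, p ≠ q → ∀ u : Rˣ, (u : R) - 1 ∈ I → corootElement p q u ∈ S)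
    {t : Finset ι} {p : ι} (hpt : p ∉ t) {g : SpecialLinearGroup ι R}
    (hg : g ∈ principalCongruenceSubgroupOn I (insert p t)) :
    ∃ h ∈ S ⊓ principalCongruenceSubgroupOn I (insert p t),
      (h * g) • (Pi.single p 1 : ι → R) = Pi.single p 1 := by
  have hE' : ∀ (i j : ι) (hij : i ≠ j), j ∈ insert p t → ∀ a ∈ I,
      SpecialLinearGroup.transvection hij a ∈ S ⊓ principalCongruenceSubgroupOn I (insert p t) :=
    fun i j hij hj a ha => ⟨elementarySubgroup_le_iff.1 hE i j hij a ha,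
      transvection_mem_principalCongruenceSubgroupOn hij hj ha⟩
  obtain ⟨hgI, hgt⟩ := mem_principalCongruenceSubgroupOn.1 hg
  have hcol : ∀ i, (g • (Pi.single p 1 : ι → R)) i - (Pi.single p 1 : ι → R) i ∈ I := fun i => by
    simpa only [smul_single_one_apply, one_apply, Pi.single_apply] using
      mem_principalCongruenceSubgroup.1 hgI i p
  simp only [mul_smul]
  rcases t.eq_empty_or_nonempty with rfl | ⟨q, hqt⟩
  · refine exists_smul_eq_single_of_apply_eq_one
      (fun i hip => hE' i p hip (Finset.mem_insert_self p ∅))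
      (fun i hip => by simpa [hip] using hcol i) ?_
    rw [smul_single_one_apply]
    exact apply_self_eq_one_of_forall_ne_smul_single fun j hjp => hgt j (by simpa using hjp)
  · have hpq : p ≠ q := (ne_of_mem_of_not_mem hqt hpt).symm
    refine exists_smul_eq_single hR hpt hqt hE' (fun u hu => ⟨hT p q hpq u hu, ?_⟩) hcol
      (y := g⁻¹ p) ?_
    · exact corootElement_mem_principalCongruenceSubgroupOn hpq (Finset.mem_insert_self p t)
        (Finset.mem_insert_of_mem hqt) hu
    · simpa only [smul_single_one_apply] using
        sum_inv_mul_apply_eq_one (Finset.mem_insert_self p t) hgt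

lemma principalCongruenceSubgroupOn_le_of_elementarySubgroup_le (hR : HasStableRangeOne R)
    (hE : elementarySubgroup ι I ≤ S)
    (hT : ∀ p q : ι, p ≠ q → ∀ u : Rˣ, (u : R) - 1 ∈ I → corootElement p q u ∈ S)
    (t : Finset ι) : principalCongruenceSubgroupOn I t ≤ S := by
  induction t using Finset.induction_on with
  | empty =>
    intro g hg
    rw [eq_one_of_forall_smul_single fun j =>
      (mem_principalCongruenceSubgroupOn.1 hg).2 j (Finset.notMem_empty j)]
    exact one_mem S
  | insert p t hpt ih =>
    intro g hg
    obtain ⟨h, ⟨hhS, hh⟩, hfix⟩ := exists_mul_smul_single_eq_single hR hE hT hpt hg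
    exact (S.mul_mem_cancel_left hhS).1 <|
      ih (mem_principalCongruenceSubgroupOn_of_insert (mul_mem hh hg) hfix)

lemma principalCongruenceSubgroup_le_of_elementarySubgroup_le (hR : HasStableRangeOne R)
    (hE : elementarySubgroup ι I ≤ S)
    (hT : ∀ p q : ι, p ≠ q → ∀ u : Rˣ, (u : R) - 1 ∈ I → corootElement p q u ∈ S) :
    principalCongruenceSubgroup ι I ≤ S := fun _ hg =>
  principalCongruenceSubgroupOn_le_of_elementarySubgroup_le hR hE hT Finset.univ <|
    mem_principalCongruenceSubgroupOn.2 ⟨hg, fun j hj => (hj (Finset.mem_univ j)).elim⟩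

lemma principalCongruenceSubgroup_sq_le_elementarySubgroup (hR : HasStableRangeOne R) (c : R) :
    principalCongruenceSubgroup ι (Ideal.span {c ^ 2}) ≤ elementarySubgroup ι (Ideal.span {c}) :=
  principalCongruenceSubgroup_le_of_elementarySubgroup_le hR
    (elementarySubgroup_mono <|
      (Ideal.span_singleton_le_span_singleton).2 (dvd_pow_self c two_ne_zero))
    fun _ _ hpq _ hu => corootElement_mem_elementarySubgroup hpq hu

lemma principalCongruenceSubgroup_sq_le_of_quotient {J : Ideal R} (hR : HasStableRangeOne (R ⧸ J))
    {c : R} (hJ : principalCongruenceSubgroup ι J ≤ S)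
    (hE : elementarySubgroup ι (Ideal.span {c}) ≤ S) :
    principalCongruenceSubgroup ι (Ideal.span {c ^ 2}) ≤ S := by
  let π := Ideal.Quotient.mk J
  have hπ (a : R) : (Ideal.span {a}).map π = Ideal.span {π a} := by
    rw [Ideal.map_span, Set.image_singleton]
  calc principalCongruenceSubgroup ι (Ideal.span {c ^ 2})
      ≤ (principalCongruenceSubgroup ι (Ideal.span {π c ^ 2})).comap
          (SpecialLinearGroup.map π) := by
        rw [← map_pow, ← hπ]
        exact principalCongruenceSubgroup_le_comap π _
    _ ≤ (elementarySubgroup ι (Ideal.span {π c})).comap (SpecialLinearGroup.map π) :=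
        Subgroup.comap_mono (principalCongruenceSubgroup_sq_le_elementarySubgroup hR _)
    _ ≤ (S.map (SpecialLinearGroup.map π)).comap (SpecialLinearGroup.map π) := by
        rw [← hπ]
        exact Subgroup.comap_mono <|
          (elementarySubgroup_map_le Ideal.Quotient.mk_surjective _).trans (Subgroup.map_mono hE)
    _ = S := Subgroup.comap_map_eq_self hJ

end Reduction

section Congruence

variable {n : ℕ} {H : Subgroup (SpecialLinearGroup (Fin n) ℤ)}

lemma isCongruenceSubgroup_iff :
    IsCongruenceSubgroup n H ↔
      ∃ N : ℕ, 1 ≤ N ∧ principalCongruenceSubgroup (Fin n) (Ideal.span {(N : ℤ)}) ≤ H := by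
  simp only [IsCongruenceSubgroup, SetLike.le_def, mem_principalCongruenceSubgroup,
    Ideal.mem_span_singleton, one_apply]

lemma IsCongruenceSubgroup.finiteIndex (hH : IsCongruenceSubgroup n H) : H.FiniteIndex := by
  obtain ⟨N, hN, hNH⟩ := isCongruenceSubgroup_iff.1 hH
  have : NeZero N := ⟨Nat.one_le_iff_ne_zero.1 hN⟩
  exact Subgroup.finiteIndex_of_le hNH

lemma IsCongruenceSubgroup.principalCongruenceSubgroup_sq_le (hH : IsCongruenceSubgroup n H)
    {c : ℤ} (hE : elementarySubgroup (Fin n) (Ideal.span {c}) ≤ H) :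
    principalCongruenceSubgroup (Fin n) (Ideal.span {c ^ 2}) ≤ H := by
  obtain ⟨N, hN, hNH⟩ := isCongruenceSubgroup_iff.1 hH
  have : NeZero N := ⟨Nat.one_le_iff_ne_zero.1 hN⟩
  exact principalCongruenceSubgroup_sq_le_of_quotient .of_finite_maximalSpectrum hNH hE

end Congruence

section Blocks

variable {n m k : ℕ} {i j : Fin n} {a : ℤ}

lemma transvection_mem_Uplus (hij : i ≠ j) (hi : (i : ℕ) < m) (hj : m ≤ (j : ℕ))
    (ha : (k : ℤ) ∣ a) : SpecialLinearGroup.transvection hij a ∈ Uplus n m k := by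
  intro r s
  rw [transvection_apply]
  split_ifs <;> simp_all

lemma transvection_mem_Uminus (hij : i ≠ j) (hi : m ≤ (i : ℕ)) (hj : (j : ℕ) < m)
    (ha : (k : ℤ) ∣ a) : SpecialLinearGroup.transvection hij a ∈ Uminus n m k := by
  intro r s
  rw [transvection_apply]
  split_ifs <;> simp_all

lemma transvection_mem_Mblock (h : m ≤ n) (hij : i ≠ j) (hblock : (i : ℕ) < m ↔ (j : ℕ) < m)
    (ha : (k : ℤ) ∣ a) : SpecialLinearGroup.transvection hij a ∈ Mblock n m k h := by
  refine ⟨fun r s hrs => ?_, fun r s => ?_, ?_, ?_⟩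
  · rw [transvection_apply]
    split_ifs <;> simp_all
  · rw [transvection_apply]
    split_ifs <;> simp_all
  · exact det_submatrix_transvection (Fin.castLE_injective h) hij a
  · refine det_submatrix_transvection (fun r s hrs => ?_) hij a
    simpa [Fin.ext_iff] using hrs

lemma elementarySubgroup_le_Fgroup (n m k : ℕ) (h : m ≤ n) :
    elementarySubgroup (Fin n) (Ideal.span {(k : ℤ)}) ≤ Fgroup n m k h := by
  refine elementarySubgroup_le_iff.2 fun i j hij a ha => Subgroup.subset_closure ?_
  have hka : (k : ℤ) ∣ a := Ideal.mem_span_singleton.1 ha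
  by_cases hblock : (i : ℕ) < m ↔ (j : ℕ) < m
  · exact .inr (transvection_mem_Mblock h hij hblock hka)
  rcases lt_or_ge (i : ℕ) m with hi | hi
  · exact .inl (.inl (transvection_mem_Uplus hij hi (by omega) hka))
  · exact .inl (.inr (transvection_mem_Uminus hij hi (by omega) hka))

end Blocks

lemma principalCongruenceSubgroup_sq_le_GammaCl (n m k : ℕ) (h : m ≤ n) :
    principalCongruenceSubgroup (Fin n) (Ideal.span {(k : ℤ) ^ 2}) ≤ GammaCl n m k h :=
  le_sInf fun _ hH =>
    hH.1.principalCongruenceSubgroup_sq_le ((elementarySubgroup_le_Fgroup n m k h).trans hH.2)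

theorem congruence_closure_is_congruence_and_finite_index_general (n m k : ℕ) (hmn : m ≤ n)
    (hk : 1 ≤ k) :
    IsCongruenceSubgroup n (GammaCl n m k hmn) ∧ (GammaCl n m k hmn).FiniteIndex := by
  have hΓ : IsCongruenceSubgroup n (GammaCl n m k hmn) :=
    isCongruenceSubgroup_iff.2 ⟨k ^ 2, Nat.one_le_pow 2 k hk, by
      rw [Nat.cast_pow]
      exact principalCongruenceSubgroup_sq_le_GammaCl n m k hmn⟩
  exact ⟨hΓ, hΓ.finiteIndex⟩

/-- For `n ≥ 3`, `1 ≤ m < n`, `k ≥ 1`: the congruence closure `Γ_k` of `F(k)`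
is itself a congruence subgroup of `SL_n(ℤ)` (it contains some principal congruence subgroup
`SL_n(Nℤ)` with `N ≥ 1`) and it has finite index in `SL_n(ℤ)`. -/
theorem congruence_closure_is_congruence_and_finite_index (n m k : ℕ)
    (hn : 3 ≤ n) (hm : 1 ≤ m) (hmn : m < n) (hk : 1 ≤ k) :
    IsCongruenceSubgroup n (GammaCl n m k hmn.le) ∧ (GammaCl n m k hmn.le).FiniteIndex :=
  congruence_closure_is_congruence_and_finite_index_general n m k hmn.le hk
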